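/- Let Z = (z_1, …, z_n) be any configuration of n entities of radius ρ ≥ 0 in ℝ^d and let 1 ≤ x ≤ n−1 be an integer. Then for all indices i ≠ j, σ_j(x) ≤ ‖z_i − z_j‖ + σ_i(x); that is, the x-separation is 1-Lipschitz as a function of the entity's center. -/

import Mathlib

open Metric Set

/-- The `x`-separation of entity `i` in the configuration `z` of entities of radius `ρ`:
the `x`-th smallest value of `dist (z i) (z j) - 2ρ` over `j ≠ i`. -/
noncomputable def xSep {d n : ℕ} (ρ : ℝ) (z : Fin n → EuclideanSpace ℝ (Fin d))
    (x : ℕ) (i : Fin n) : ℝ :=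
  sInf {r : ℝ | x ≤ {j : Fin n | j ≠ i ∧ dist (z i) (z j) - 2 * ρ ≤ r}.ncard}

/-!
An order statistic grows by at most `c` when the family is reindexed along an injection that raises
each value by at most `c`. To compare the distances from `z i` with those from `z j`, reindex by the
transposition of `i` and `j`: it carries the indices other than `i` to those other than `j`, it
fixes every third index `k`, where the triangle inequality through `z i` applies, and it matches the
distance from `z i` to `z j` with itself.
-/

section OrderStatistic

variable {ι κ α : Type*} [ConditionallyCompleteLinearOrder α]

/-- The `k`-th smallest value of `f` on `s`, counted with multiplicity and starting from `k = 1`.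
It is meaningful for a finite set `s` and `1 ≤ k ≤ s.ncard`; otherwise the infimum may be taken over
an empty or unbounded set. -/
noncomputable def orderStatistic (f : ι → α) (s : Set ι) (k : ℕ) : α :=
  sInf {r | k ≤ {j | j ∈ s ∧ f j ≤ r}.ncard}

variable {f : ι → α} {s : Set ι} {k : ℕ}

theorem orderStatistic_le [Nonempty α] {r : α} (hs : s.Finite) (hk : 1 ≤ k)
    (hr : k ≤ {j | j ∈ s ∧ f j ≤ r}.ncard) : orderStatistic f s k ≤ r := by
  obtain ⟨m, hm⟩ := (hs.image f).bddBelow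
  refine csInf_le ⟨m, fun q (hq : k ≤ _) ↦ ?_⟩ hr
  obtain ⟨j, hjs, hjq⟩ := nonempty_of_ncard_ne_zero (Nat.one_le_iff_ne_zero.mp (hk.trans hq))
  exact (hm (mem_image_of_mem f hjs)).trans hjq

theorem le_orderStatistic [Nonempty α] {b : α} (hs : s.Finite) (hk : k ≤ s.ncard)
    (hb : ∀ r, k ≤ {j | j ∈ s ∧ f j ≤ r}.ncard → b ≤ r) : b ≤ orderStatistic f s k := by
  obtain ⟨M, hM⟩ := (hs.image f).bddAbove
  have sublevel_eq : {j | j ∈ s ∧ f j ≤ M} = s :=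
    sep_eq_self_iff_mem_true.mpr fun j hj ↦ hM (mem_image_of_mem f hj)
  exact le_csInf ⟨M, hk.trans_eq (congrArg ncard sublevel_eq.symm)⟩ hb

theorem orderStatistic_le_add_of_injOn [AddCommGroup α] [IsOrderedAddMonoid α]
    {g : κ → α} {t : Set κ} {φ : ι → κ} {c : α} (hs : s.Finite) (ht : t.Finite)
    (hk : 1 ≤ k) (hks : k ≤ s.ncard) (hφ : MapsTo φ s t) (hinj : InjOn φ s)
    (hle : ∀ j ∈ s, g (φ j) ≤ c + f j) :
    orderStatistic g t k ≤ c + orderStatistic f s k := by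
  rw [← sub_le_iff_le_add']
  refine le_orderStatistic hs hks fun r hr ↦ sub_le_iff_le_add'.mpr ?_
  refine orderStatistic_le ht hk (hr.trans ?_)
  refine ncard_le_ncard_of_injOn φ ?_ (hinj.mono fun _ hj ↦ hj.1) (ht.subset fun _ hj ↦ hj.1)
  rintro j ⟨hjs, hjr⟩
  exact ⟨hφ hjs, (hle j hjs).trans (add_le_add_right hjr c)⟩

end OrderStatistic

section Separation

variable {ι X : Type*} [PseudoMetricSpace X]

/-- The `x`-separation of entity `i` in a configuration `z` of balls of radius `ρ`, in an arbitrary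
pseudometric space and with an arbitrary index type. -/
noncomputable def separation (ρ : ℝ) (z : ι → X) (x : ℕ) (i : ι) : ℝ :=
  orderStatistic (fun j ↦ dist (z i) (z j) - 2 * ρ) {i}ᶜ x

theorem xSep_eq_separation {d n : ℕ} (ρ : ℝ) (z : Fin n → EuclideanSpace ℝ (Fin d)) (x : ℕ)
    (i : Fin n) : xSep ρ z x i = separation ρ z x i :=
  rfl

theorem mapsTo_swap_compl_singleton [DecidableEq ι] (i j : ι) :
    MapsTo (Equiv.swap i j) {i}ᶜ {j}ᶜ := by
  intro k hki hkj
  exact hki ((Equiv.swap i j).injective (hkj.trans (Equiv.swap_apply_left i j).symm))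

theorem dist_apply_swap_le [DecidableEq ι] (z : ι → X) (i j k : ι) :
    dist (z j) (z (Equiv.swap i j k)) ≤ dist (z i) (z j) + dist (z i) (z k) := by
  rcases eq_or_ne k j with rfl | hkj
  · rw [Equiv.swap_apply_right, dist_comm]
    exact le_add_of_nonneg_left dist_nonneg
  rcases eq_or_ne k i with rfl | hki
  · rw [Equiv.swap_apply_left, dist_self]
    positivity
  · rw [Equiv.swap_apply_of_ne_of_ne hki hkj]
    exact dist_triangle_left _ _ _

theorem stmt3_general [Finite ι] (ρ : ℝ) (z : ι → X) {x : ℕ} (hx : 1 ≤ x)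
    (hxι : x < Nat.card ι) (i j : ι) :
    separation ρ z x j ≤ dist (z i) (z j) + separation ρ z x i := by
  classical
  have le_ncard_compl : x ≤ ({i}ᶜ : Set ι).ncard := by
    rw [ncard_compl, ncard_singleton]
    exact Nat.le_sub_one_of_lt hxι
  refine orderStatistic_le_add_of_injOn (toFinite _) (toFinite _) hx le_ncard_compl
    (mapsTo_swap_compl_singleton i j) (Equiv.swap i j).injective.injOn fun k _ ↦ ?_
  linarith [dist_apply_swap_le z i j k]

end Separation

theorem stmt3 (d n : ℕ) (ρ : ℝ) (hρ : 0 ≤ ρ)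
    (z : Fin n → EuclideanSpace ℝ (Fin d))
    (x : ℕ) (hx1 : 1 ≤ x) (hxn : x ≤ n - 1) :
    ∀ i j : Fin n, i ≠ j → xSep ρ z x j ≤ dist (z i) (z j) + xSep ρ z x i := by
  intro i j _
  simpa only [xSep_eq_separation] using stmt3_general ρ z hx1 (by rw [Nat.card_fin]; lia) i j
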